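/- Let K be a commutative ring, d ≥ 1, and for j = 0,…,d−1 let n_j be a natural number and A_j, D_j ∈ K^{n_j × n_{j+1 mod d}}. For tuples P = (P_0,…,P_{d−1}) with P_j ∈ 𝒫_{n_j} and Q = (Q_0,…,Q_{d−1}) with Q_j ∈ 𝒬_{n_j}, define the n_0 × n_0 matrix M(P,Q) = ∏_{j=0}^{d−1} ((Q_j P_j) A_j (Q_{j+1 mod d} P_{j+1 mod d})^{-1} + D_j). Write det[xI + A_0⋯A_{d−1}] = ∑_{i=0}^{n_0} x^{n_0−i} p_i, det[xI + D_0⋯D_{d−1}] = ∑_{i=0}^{n_0} x^{n_0−i} q_i, and ∑_{P,Q} det[xI + M(P,Q)] = ∑_{i=0}^{n_0} x^{n_0−i} r_i as polynomials in K[x]. Then for all 0 ≤ k ≤ n_0 with k ≤ n_j for all j, r_k = (1+1)^{n_0+⋯+n_{d−1}} · ∑_{i=0}^{k} (∏_{j=0}^{d−1} (n_j−k+i)!·(n_j−i)!/(n_j−k)!) · p_i · q_{k−i}, where each quotient of factorials is a natural number cast into K. -/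

import Mathlib

/-- `[A]_{S,T}`: the determinant of the submatrix of `A` with rows indexed by `S` and
columns indexed by `T`, both taken in increasing order. -/
def minorDet {K : Type} [CommRing K] {m p : ℕ} (A : Matrix (Fin m) (Fin p) K)
    (S : Finset (Fin m)) (T : Finset (Fin p)) : K :=
  if h : T.card = S.card then (A.submatrix (S.orderEmbOfFin rfl) (T.orderEmbOfFin h)).det else 0

/-- Reindex the rows of a matrix along an equality of dimensions. -/
def rowCast {K : Type} [CommRing K] {a b p : ℕ} (h : a = b) (M : Matrix (Fin a) (Fin p) K) :
    Matrix (Fin b) (Fin p) K :=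
  M.submatrix (Fin.cast h.symm) id

/-- Reindex the columns of a matrix along an equality of dimensions. -/
def colCast {K : Type} [CommRing K] {m a b : ℕ} (h : a = b) (M : Matrix (Fin m) (Fin a) K) :
    Matrix (Fin m) (Fin b) K :=
  M.submatrix id (Fin.cast h.symm)

open Fin.NatCast in
/-- Partial products `A_0 * A_1 * ⋯ * A_{m-1}` of a cyclic family of matrices
`A j : Matrix (Fin (n j)) (Fin (n (j+1))) K` for `j : Fin d`. -/
def cycProdAux {K : Type} [CommRing K] {d : ℕ} [NeZero d] {n : Fin d → ℕ}
    (A : ∀ j : Fin d, Matrix (Fin (n j)) (Fin (n (j + 1))) K) :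
    (m : ℕ) → Matrix (Fin (n 0)) (Fin (n (m : Fin d))) K
  | 0 => colCast (congrArg n (by simp)) (1 : Matrix (Fin (n 0)) (Fin (n 0)) K)
  | m + 1 => colCast (congrArg n (by push_cast; ring))
      (cycProdAux A m * A ((m : ℕ) : Fin d))

/-- The cyclic product `A_0 * A_1 * ⋯ * A_{d-1}`, an `n 0 × n 0` matrix. -/
def cycProd {K : Type} [CommRing K] {d : ℕ} [NeZero d] {n : Fin d → ℕ}
    (A : ∀ j : Fin d, Matrix (Fin (n j)) (Fin (n (j + 1))) K) :
    Matrix (Fin (n 0)) (Fin (n 0)) K :=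
  colCast (congrArg n (by simp)) (cycProdAux A d)

/-- `[A]^{(k)}`: the sum of all principal `k × k` minors of `A`. -/
def minorSum {K : Type} [CommRing K] {m : ℕ} (A : Matrix (Fin m) (Fin m) K) (k : ℕ) : K :=
  ∑ S ∈ Finset.powersetCard k (Finset.univ : Finset (Fin m)), minorDet A S S

/-- The sign matrix (diagonal matrix with entries `±1`) determined by a choice of signs `ε`. -/
def signMatrix {m : ℕ} (K : Type) [CommRing K] (ε : Fin m → Bool) : Matrix (Fin m) (Fin m) K :=
  Matrix.diagonal (fun i => if ε i then 1 else -1)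

/-- `det[xI + A]` as a polynomial in `K[x]`. -/
noncomputable def detXIplus {K : Type} [CommRing K] {m : ℕ} (A : Matrix (Fin m) (Fin m) K) : Polynomial K :=
  ((Polynomial.X : Polynomial K) • (1 : Matrix (Fin m) (Fin m) (Polynomial K)) +
    A.map Polynomial.C).det

/-!
The matrix `T_A` with the blocks `A_j` in positions `(j, j + 1)` has `A_0 ⋯ A_{d-1}` as the leading
block of `T_A ^ d`. After negating the rows of `T_A` outside the leading block, the coefficients of
`det[xI + A_0 ⋯ A_{d-1}]` become sums of its principal minors, and only minors taking the same
number of rows from every block survive. On `T_A`, the matrices `Q_j P_j` act as one signed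
permutation. Averaging over the signs splits a minor of `Q T_A Q + T_D` on `S` into products of a
minor of `T_A` on some `U ⊆ S` and a minor of `T_D` on `S \ U`; averaging over the permutations
decouples the two minors, at the cost of counting the permutations that make their index sets
disjoint.
-/

open Finset

lemma sum_finset_subtype_eq_sum_powerset {ι N : Type*} [AddCommMonoid N] (S : Finset ι)
    (f : Finset ι → N) :
    ∑ U : Finset S, f (U.map (.subtype _)) = ∑ U ∈ S.powerset, f U := by
  classical
  refine sum_bij' (fun U _ => U.map (.subtype _)) (fun U _ => U.subtype (· ∈ S)) ?_ ?_ ?_ ?_ ?_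
  · intro U _
    exact mem_powerset.2 (map_subtype_subset U)
  · simp
  · intro U _
    ext a
    simp
  · intro U hU
    exact subtype_map_of_mem fun _ h => mem_powerset.1 hU h
  · simp

section PrincipalMinor

variable {ι κ R : Type*} [DecidableEq ι] [DecidableEq κ] [CommRing R]

/-- The principal minor of `M` on the rows and columns in `S`. Indexing the submatrix by the subtype
`S` itself avoids choosing an order on `ι`. -/
def principalMinor (M : Matrix ι ι R) (S : Finset ι) : R :=
  (M.submatrix ((↑) : S → ι) (↑)).det

lemma principalMinor_map {R' : Type*} [CommRing R'] (f : R →+* R') (M : Matrix ι ι R)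
    (S : Finset ι) :
    principalMinor (M.map f) S = f (principalMinor M S) := by
  rw [principalMinor, principalMinor, RingHom.map_det]
  rfl

lemma principalMinor_submatrix (M : Matrix ι ι R) (e : κ ↪ ι) (S : Finset κ) :
    principalMinor (M.submatrix e e) S = principalMinor M (S.map e) := by
  let restrict : S ≃ S.map e :=
    Equiv.ofBijective (fun a => ⟨e a, mem_map_of_mem e a.2⟩)
      ⟨fun a b h => Subtype.ext (e.injective (congrArg Subtype.val h)), fun b => by
        obtain ⟨a, ha, hab⟩ := mem_map.1 b.2
        exact ⟨⟨a, ha⟩, Subtype.ext hab⟩⟩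
  rw [principalMinor, principalMinor, ← Matrix.det_submatrix_equiv_self restrict]
  rfl

variable [Fintype ι]

lemma det_add_eq_sum_piecewise (M N : Matrix ι ι R) :
    (M + N).det = ∑ S : Finset ι, (Matrix.of (S.piecewise M.row N.row)).det :=
  (Matrix.detRowAlternating (n := ι) (R := R)).toMultilinearMap.map_add_univ M N

lemma det_add_diagonal_eq_sum_principalMinor (M : Matrix ι ι R) (x : ι → R) :
    (M + Matrix.diagonal x).det = ∑ S : Finset ι, (∏ a ∈ Sᶜ, x a) * principalMinor M S := by
  rw [det_add_eq_sum_piecewise]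
  refine sum_congr rfl fun S _ => ?_
  have rows_scaled : Matrix.of (S.piecewise M.row (Matrix.diagonal x).row) =
      Matrix.diagonal (S.piecewise (1 : ι → R) x) *
        Matrix.of (S.piecewise M.row (1 : Matrix ι ι R).row) := by
    ext a b
    by_cases ha : a ∈ S <;> simp [ha, Matrix.diagonal_apply, Matrix.one_apply]
  have prod_weights : ∏ a, S.piecewise (1 : ι → R) x a = ∏ a ∈ Sᶜ, x a := by
    simp [prod_piecewise, compl_eq_univ_sdiff]
  rw [rows_scaled, Matrix.det_mul, Matrix.det_diagonal, prod_weights,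
    Matrix.det_piecewise_one_eq_submatrix_det, principalMinor]

lemma det_of_two_blocks (M N : Matrix ι ι R) (U : Finset ι) :
    (Matrix.of fun a b => if a ∈ U ∧ b ∈ U then M a b else
      if a ∉ U ∧ b ∉ U then N a b else 0).det = principalMinor M U * principalMinor N Uᶜ := by
  rw [Matrix.twoBlockTriangular_det (R := R) _ (· ∈ U) (fun a ha b hb => by simp [ha, hb])]
  congr 1
  · rw [principalMinor]
    congr! 1
    ext ⟨a, ha⟩ ⟨b, hb⟩
    simp [Matrix.toSquareBlockProp, ha, hb]
  · rw [principalMinor, ← Matrix.det_submatrix_equiv_self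
      (Equiv.subtypeEquivRight fun a : ι => (mem_compl (s := U) (a := a)).symm)]
    congr! 1
    ext ⟨a, ha⟩ ⟨b, hb⟩
    simp [Matrix.toSquareBlockProp, ha, hb]

end PrincipalMinor

section SignAveraging

variable {ι R : Type*} [Fintype ι] [DecidableEq ι] [CommRing R]

/-- The sign `±1` encoded by a Boolean, with the convention of `signMatrix`. -/
def boolSign (R : Type*) [CommRing R] (b : Bool) : R := if b then 1 else -1

lemma sum_prod_boolSign (U : Finset ι) (σ : Equiv.Perm ι) :
    ∑ ε : ι → Bool, ∏ i, (if σ i ∈ U then boolSign R (ε (σ i)) * boolSign R (ε i) else 1) =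
      ∏ i, if i ∈ U ↔ σ i ∈ U then (1 + 1 : R) else 0 := by
  have regroup (ε : ι → Bool) :
      ∏ i, (if σ i ∈ U then boolSign R (ε (σ i)) * boolSign R (ε i) else 1) =
        ∏ i, (if i ∈ U then boolSign R (ε i) else 1) *
          (if σ i ∈ U then boolSign R (ε i) else 1) := by
    rw [prod_mul_distrib, ← Equiv.prod_comp σ (fun i => if i ∈ U then boolSign R (ε i) else 1),
      ← prod_mul_distrib]
    refine prod_congr rfl fun i _ => ?_
    split_ifs <;> simp only [mul_one]
  simp only [regroup]
  rw [← Fintype.prod_sum (fun i b => (if i ∈ U then boolSign R b else 1) *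
    (if σ i ∈ U then boolSign R b else 1))]
  refine prod_congr rfl fun i _ => ?_
  by_cases hi : i ∈ U <;> by_cases hσ : σ i ∈ U <;> simp [hi, hσ, boolSign, one_add_one_eq_two]

lemma sum_sign_det_piecewise (A D : Matrix ι ι R) (U : Finset ι) :
    ∑ ε : ι → Bool, (Matrix.of (U.piecewise
        (Matrix.of fun a b => boolSign R (ε a) * A a b * boolSign R (ε b)).row D.row)).det =
      (1 + 1) ^ Fintype.card ι * (principalMinor A U * principalMinor D Uᶜ) := by
  rw [← det_of_two_blocks]
  simp only [Matrix.det_apply']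
  rw [sum_comm, mul_sum]
  refine sum_congr rfl fun σ _ => ?_
  rw [← mul_sum, mul_left_comm]
  congr 1
  have split_signs (ε : ι → Bool) :
      ∏ i, Matrix.of (U.piecewise
        (Matrix.of fun a b => boolSign R (ε a) * A a b * boolSign R (ε b)).row D.row) (σ i) i =
      (∏ i, if σ i ∈ U then boolSign R (ε (σ i)) * boolSign R (ε i) else 1) *
        ∏ i, if σ i ∈ U then A (σ i) i else D (σ i) i := by
    rw [← prod_mul_distrib]
    refine prod_congr rfl fun i _ => ?_
    by_cases hσ : σ i ∈ U
    · simp only [hσ, piecewise_eq_of_mem, Matrix.of_apply, Matrix.row_apply, if_true]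
      ring
    · simp [hσ]
  simp only [split_signs]
  rw [← sum_mul, sum_prod_boolSign, ← prod_mul_distrib, ← card_univ, ← prod_const,
    ← prod_mul_distrib]
  refine prod_congr rfl fun i _ => ?_
  by_cases hi : i ∈ U <;> by_cases hσ : σ i ∈ U <;> simp [hi, hσ]

lemma sum_sign_det_add (A D : Matrix ι ι R) :
    ∑ ε : ι → Bool, (Matrix.of (fun a b => boolSign R (ε a) * A a b * boolSign R (ε b)) + D).det =
      (1 + 1) ^ Fintype.card ι * ∑ U : Finset ι, principalMinor A U * principalMinor D Uᶜ := by
  simp only [det_add_eq_sum_piecewise]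
  rw [sum_comm, mul_sum]
  exact sum_congr rfl fun U _ => sum_sign_det_piecewise A D U

lemma sum_comp_restrict {N : Type*} [AddCommMonoid N] (S : Finset ι) (f : (S → Bool) → N) :
    ∑ ε : ι → Bool, f (fun a => ε a) = 2 ^ (Fintype.card ι - #S) • ∑ ε : S → Bool, f ε := by
  rw [← Equiv.sum_comp (Equiv.piEquivPiSubtypeProd (· ∈ S) fun _ => Bool).symm,
    Fintype.sum_prod_type, ← sum_nsmul]
  refine sum_congr rfl fun ε _ => ?_
  simp [Equiv.piEquivPiSubtypeProd, Fintype.card_subtype_compl]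

lemma sum_sign_principalMinor_add (A D : Matrix ι ι R) (S : Finset ι) :
    ∑ ε : ι → Bool, principalMinor
        (Matrix.of (fun a b => boolSign R (ε a) * A a b * boolSign R (ε b)) + D) S =
      (1 + 1) ^ Fintype.card ι *
        ∑ U ∈ S.powerset, principalMinor A U * principalMinor D (S \ U) := by
  let restrict (M : Matrix ι ι R) : Matrix S S R := M.submatrix (↑) (↑)
  have minor_restrict (M : Matrix ι ι R) (U : Finset S) :
      principalMinor (restrict M) U = principalMinor M (U.map (.subtype (· ∈ S))) :=
    principalMinor_submatrix M (.subtype (· ∈ S)) U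
  have map_compl (U : Finset S) :
      Uᶜ.map (.subtype (· ∈ S)) = S \ U.map (.subtype (· ∈ S)) := by
    ext a
    by_cases ha : a ∈ S <;> simp [ha]
  refine (sum_comp_restrict S fun ε => (Matrix.of
    (fun a b => boolSign R (ε a) * restrict A a b * boolSign R (ε b)) + restrict D).det).trans ?_
  rw [sum_sign_det_add, ← sum_finset_subtype_eq_sum_powerset]
  simp only [minor_restrict, map_compl]
  rw [Fintype.card_coe, nsmul_eq_mul, ← mul_assoc, Nat.cast_pow, Nat.cast_ofNat,
    ← one_add_one_eq_two, ← pow_add, Nat.sub_add_cancel (card_le_univ S)]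

end SignAveraging

section BlockTriangular

variable {ι α R : Type*} [Fintype ι] [DecidableEq ι] [LinearOrder α] [CommRing R]

lemma det_one_add_of_strictly_blockTriangular (N : Matrix ι ι R) (b : ι → α)
    (hN : ∀ i j, b j ≤ b i → N i j = 0) : (1 + N).det = 1 := by
  have triangular : (1 + N).BlockTriangular b :=
    Matrix.blockTriangular_one.add fun i j hij => hN i j hij.le
  rw [triangular.det]
  refine prod_eq_one fun k _ => ?_
  have diagonal_block : (1 + N).toSquareBlock b k = 1 := by
    ext ⟨i, hi⟩ ⟨j, hj⟩
    simp [Matrix.toSquareBlock_def, Matrix.one_apply, hN i j (hj.trans hi.symm).le]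
  rw [diagonal_block, Matrix.det_one]

end BlockTriangular

lemma lt_add_one_of_add_one_ne_zero {d : ℕ} [NeZero d] {j : Fin d} (hj : j + 1 ≠ 0) :
    j < j + 1 := by
  have not_last : (j : ℕ) + 1 ≠ d := fun h => hj (Fin.ext (by simp [Fin.val_add, h]))
  rw [Fin.lt_def, Fin.val_add_one_of_lt' (by lia)]
  exact Nat.lt_succ_self _

/-- The matrix `T` is homogeneous of degree one for the grading `g` of its index set by the cyclic
group `Fin d`. -/
def ShiftsGrade {ι R : Type*} [CommRing R] {d : ℕ} [NeZero d] (g : ι → Fin d)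
    (T : Matrix ι ι R) : Prop :=
  ∀ a b, g b ≠ g a + 1 → T a b = 0

namespace ShiftsGrade

open scoped Fin.NatCast

variable {ι R : Type*} [Fintype ι] [DecidableEq ι] [CommRing R] {d : ℕ} [NeZero d]
  {g : ι → Fin d} {T : Matrix ι ι R}

lemma pow_apply_eq_zero (hT : ShiftsGrade g T) (m : ℕ) (a b : ι) (hab : g b ≠ g a + m) :
    (T ^ m) a b = 0 := by
  induction m generalizing b with
  | zero =>
    have : a ≠ b := by
      rintro rfl
      simp at hab
    rw [pow_zero, Matrix.one_apply_ne this]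
  | succ m ih =>
    rw [pow_succ, Matrix.mul_apply]
    refine sum_eq_zero fun c _ => ?_
    by_cases hc : g c = g a + m
    · rw [hT c b (by rwa [hc, add_assoc, ← Nat.cast_succ]), mul_zero]
    · rw [ih c hc, zero_mul]

lemma geomSum_apply_of_grade_eq (hT : ShiftsGrade g T) {a b : ι} (hab : g a = g b) :
    (∑ l ∈ range d, T ^ l) a b = (1 : Matrix ι ι R) a b := by
  rw [Matrix.sum_apply, sum_eq_single_of_mem 0 (mem_range.2 (NeZero.pos d)), pow_zero]
  intro l hl hl0
  refine hT.pow_apply_eq_zero l a b fun h => ?_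
  rw [← hab, left_eq_add, Fin.natCast_eq_zero] at h
  exact hl0 (Nat.eq_zero_of_dvd_of_lt h (mem_range.1 hl))

lemma det_geomSum_rows (hT : ShiftsGrade g T) :
    (Matrix.of fun a b =>
      if g a = 0 then (∑ l ∈ range d, T ^ l) a b else (1 : Matrix ι ι R) a b).det = 1 := by
  let N : Matrix ι ι R :=
    Matrix.of fun a b => if g a = 0 ∧ g b ≠ 0 then (∑ l ∈ range d, T ^ l) a b else 0
  rw [← det_one_add_of_strictly_blockTriangular N g ?_]
  · congr 1
    ext a b
    by_cases ha : g a = 0 <;> by_cases hb : g b = 0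
    · simp [N, ha, hb, hT.geomSum_apply_of_grade_eq (ha.trans hb.symm)]
    · have : a ≠ b := fun h => hb (h ▸ ha)
      simp [N, ha, hb, this]
    all_goals simp [N, ha]
  · intro a b hba
    refine if_neg fun ⟨ha, hb⟩ => hb ?_
    rwa [ha, nonpos_iff_eq_zero] at hba

lemma geomSum_mul_diagonal_sub_apply (hT : ShiftsGrade g T) (x : R) {a : ι} (ha : g a = 0) (b : ι) :
    ((∑ l ∈ range d, T ^ l) * (Matrix.diagonal (fun c => if g c = 0 then x else 1) - T)) a b =
      if g b = 0 then x * (1 : Matrix ι ι R) a b - (T ^ d) a b else 0 := by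
  have split : Matrix.diagonal (fun c => if g c = 0 then x else 1) - T =
      (1 - T) + Matrix.diagonal (fun c => if g c = 0 then x - 1 else 0) := by
    rw [← Matrix.diagonal_one, sub_add_eq_add_sub, Matrix.diagonal_add]
    congr! 3
    split_ifs <;> simp
  rw [split, mul_add, geom_sum_mul_neg, Matrix.add_apply, Matrix.sub_apply, Matrix.mul_diagonal]
  split_ifs with hb
  · rw [hT.geomSum_apply_of_grade_eq (ha.trans hb.symm)]
    ring
  · have : a ≠ b := fun h => hb (h ▸ ha)
    rw [Matrix.one_apply_ne this, hT.pow_apply_eq_zero d a b (by simpa [ha] using hb)]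
    simp

lemma det_one_sub_of_grade_ne_zero (hT : ShiftsGrade g T) :
    (1 - T.toSquareBlockProp (g · ≠ 0)).det = 1 := by
  rw [sub_eq_add_neg]
  refine det_one_add_of_strictly_blockTriangular _ (fun a => g a) fun a b hba => ?_
  refine neg_eq_zero.2 (hT a b fun h => ?_)
  exact absurd (hba.trans_eq' h) (lt_add_one_of_add_one_ne_zero (h ▸ b.2)).not_ge

lemma det_diagonal_sub (hT : ShiftsGrade g T) (x : R) :
    (Matrix.diagonal (fun a => if g a = 0 then x else 1) - T).det =
      (Matrix.scalar _ x - (T ^ d).toSquareBlockProp (g · = 0)).det := by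
  -- `W` performs unimodular row operations that clear the rows of grade zero outside grade zero.
  let W : Matrix ι ι R := Matrix.of fun a b =>
    if g a = 0 then (∑ l ∈ range d, T ^ l) a b else (1 : Matrix ι ι R) a b
  let M := Matrix.diagonal (fun a => if g a = 0 then x else 1) - T
  have zero_row {a : ι} (ha : g a = 0) (b : ι) :
      (W * M) a b = if g b = 0 then x * (1 : Matrix ι ι R) a b - (T ^ d) a b else 0 := by
    rw [← hT.geomSum_mul_diagonal_sub_apply x ha b]
    simp [W, Matrix.mul_apply, ha, M]
  have nonzero_row {a : ι} (ha : g a ≠ 0) (b : ι) : (W * M) a b = M a b := by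
    simp [W, Matrix.mul_apply, ha, Matrix.one_apply]
  calc M.det = (W * M).det := by rw [Matrix.det_mul, hT.det_geomSum_rows, one_mul]
    _ = _ := by
      rw [Matrix.twoBlockTriangular_det' (W * M) (g · = 0)
        fun a ha b hb => by simp [zero_row ha, hb]]
      convert mul_one _ using 2
      · convert hT.det_one_sub_of_grade_ne_zero using 2
        ext ⟨a, ha⟩ ⟨b, hb⟩
        simp [Matrix.toSquareBlockProp, nonzero_row ha, M, Matrix.diagonal_apply,
          Matrix.one_apply, ha]
      · ext ⟨a, ha⟩ ⟨b, hb⟩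
        simp [Matrix.toSquareBlockProp, zero_row ha, hb, Matrix.diagonal_apply, Matrix.one_apply]

end ShiftsGrade

section Balanced

variable {ι J : Type*} [Fintype ι] [Fintype J] [DecidableEq J]

/-- The finite sets of indices with exactly `k` elements in every fibre of `g`. -/
def balanced (g : ι → J) (k : ℕ) : Finset (Finset ι) :=
  {S | ∀ j, #{a ∈ S | g a = j} = k}

lemma mem_balanced {g : ι → J} {k : ℕ} {S : Finset ι} :
    S ∈ balanced g k ↔ ∀ j, #{a ∈ S | g a = j} = k := by
  simp [balanced]

lemma eq_of_mem_balanced [Nonempty J] {g : ι → J} {k l : ℕ} {S : Finset ι}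
    (hk : S ∈ balanced g k) (hl : S ∈ balanced g l) : k = l :=
  have ⟨j⟩ := ‹Nonempty J›
  (mem_balanced.1 hk j).symm.trans (mem_balanced.1 hl j)

open scoped Fin.NatCast in
lemma eq_apply_zero_of_apply_add_one_eq {α : Type*} {d : ℕ} [NeZero d] {c : Fin d → α}
    (hc : ∀ j, c (j + 1) = c j) (j : Fin d) : c j = c 0 := by
  have natCast_eq (m : ℕ) : c m = c 0 := by
    induction m with
    | zero => simp
    | succ m ih => rw [Nat.cast_succ, hc, ih]
  rw [← natCast_eq j, Fin.cast_val_eq_self]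

lemma ShiftsGrade.exists_mem_balanced {R : Type*} [DecidableEq ι] [CommRing R] {d : ℕ} [NeZero d]
    {g : ι → Fin d} {T : Matrix ι ι R} (hT : ShiftsGrade g T) {S : Finset ι}
    (hS : principalMinor T S ≠ 0) : ∃ k, S ∈ balanced g k := by
  -- A nonzero term of the minor is a permutation of `S` that shifts the grade by one.
  obtain ⟨σ, -, hσ⟩ := exists_ne_zero_of_sum_ne_zero
    ((Matrix.det_apply' (T.submatrix ((↑) : S → ι) (↑))).symm.trans_ne hS)
  have grade_step (a : S) : g a = g (σ a) + 1 := by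
    by_contra ha
    exact hσ (by rw [prod_eq_zero (mem_univ a) (hT _ _ ha), mul_zero])
  have card_fiber (j : Fin d) : #{a ∈ S | g a = j} = #{a : S | g a = j} := by
    rw [univ_eq_attach, filter_attach (fun a => g a = j), card_map, card_attach]
  refine ⟨_, mem_balanced.2 (eq_apply_zero_of_apply_add_one_eq fun j => ?_)⟩
  rw [card_fiber, card_fiber]
  exact card_equiv σ fun a => by simp [grade_step a]

end Balanced

/-- `T` with its rows of nonzero grade negated, so that the coefficients of `det (x + T ^ d)` on
grade zero are sums of its principal minors without further signs. -/
def negateOffZero {ι R : Type*} [CommRing R] {d : ℕ} [NeZero d] (g : ι → Fin d)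
    (T : Matrix ι ι R) : Matrix ι ι R :=
  Matrix.of fun a b => if g a = 0 then T a b else -T a b

lemma card_filter_compl_add_card_filter {ι : Type*} [Fintype ι] [DecidableEq ι] (p : ι → Prop)
    [DecidablePred p] (S : Finset ι) : #{a ∈ Sᶜ | p a} + #{a ∈ S | p a} = #{a | p a} := by
  rw [← card_union_of_disjoint (disjoint_filter_filter disjoint_compl_left), ← filter_union,
    union_comm, union_compl]

namespace ShiftsGrade

open Polynomial

variable {ι R : Type*} [CommRing R] {d : ℕ} [NeZero d] {g : ι → Fin d} {T : Matrix ι ι R}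

lemma map {R' : Type*} [CommRing R'] (hT : ShiftsGrade g T) (f : R →+* R') :
    ShiftsGrade g (T.map f) :=
  fun a b hab => by rw [Matrix.map_apply, hT a b hab, map_zero]

lemma negate (hT : ShiftsGrade g T) : ShiftsGrade g (negateOffZero g T) :=
  fun a b hab => by simp [negateOffZero, hT a b hab]

variable [Fintype ι] [DecidableEq ι]

lemma det_negateOffZero_add_diagonal (hT : ShiftsGrade g T) (x : R) :
    (negateOffZero g T + Matrix.diagonal (fun a => if g a = 0 then x else 1)).det =
      (Matrix.scalar _ x + (T ^ d).toSquareBlockProp (g · = 0)).det := by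
  have factor_signs :
      negateOffZero g T + Matrix.diagonal (fun a => if g a = 0 then x else 1) =
        Matrix.diagonal (fun a => if g a = 0 then -1 else 1) *
          (Matrix.diagonal (fun a => if g a = 0 then -x else 1) - T) := by
    ext a b
    rcases eq_or_ne a b with rfl | hab
    · by_cases ha : g a = 0 <;> simp [negateOffZero, ha, sub_eq_neg_add, add_comm]
    · by_cases ha : g a = 0 <;> simp [negateOffZero, ha, hab]
  have negate : Matrix.scalar _ (-x) - (T ^ d).toSquareBlockProp (g · = 0) =
      -(Matrix.scalar _ x + (T ^ d).toSquareBlockProp (g · = 0)) := by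
    rw [map_neg, neg_add']
  rw [factor_signs, Matrix.det_mul, hT.det_diagonal_sub, negate, Matrix.det_neg, ← mul_assoc,
    Matrix.det_diagonal, prod_ite, prod_const_one, mul_one, prod_const, ← Fintype.card_subtype,
    ← mul_pow, neg_one_mul, neg_neg, one_pow, one_mul]

lemma det_X_add_pow_eq_sum (hT : ShiftsGrade g T) :
    (Matrix.scalar _ (X : R[X]) + ((T ^ d).toSquareBlockProp (g · = 0)).map C).det =
      ∑ S, X ^ #{a ∈ Sᶜ | g a = 0} * C (principalMinor (negateOffZero g T) S) := by
  have map_pow_block : ((T ^ d).toSquareBlockProp (g · = 0)).map C =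
      ((T.map (C : R →+* R[X])) ^ d).toSquareBlockProp (g · = 0) := by
    rw [← RingHom.mapMatrix_apply C T, ← map_pow]
    rfl
  have map_negate : negateOffZero g (T.map C) =
      (negateOffZero g T).map (C : R →+* R[X]) := by
    ext1 a b
    by_cases ha : g a = 0 <;> simp [negateOffZero, ha]
  rw [map_pow_block, ← (hT.map C).det_negateOffZero_add_diagonal, map_negate,
    det_add_diagonal_eq_sum_principalMinor]
  simp only [principalMinor_map, prod_ite, prod_const_one, mul_one, prod_const]

theorem coeff_det_X_add_pow (hT : ShiftsGrade g T) {k : ℕ} (hk : k ≤ #{a | g a = 0}) :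
    (Matrix.scalar _ (X : R[X]) + ((T ^ d).toSquareBlockProp (g · = 0)).map C).det.coeff
        (#{a | g a = 0} - k) =
      ∑ S ∈ balanced g k, principalMinor (negateOffZero g T) S := by
  rw [hT.det_X_add_pow_eq_sum, finsetSum_coeff, ← univ_inter (balanced g k), ← sum_ite_mem]
  refine sum_congr rfl fun S _ => ?_
  rw [coeff_mul_C, coeff_X_pow, ite_mul, one_mul, zero_mul]
  by_cases hS : principalMinor (negateOffZero g T) S = 0
  · simp only [hS, ite_self]
  obtain ⟨l, hl⟩ := hT.negate.exists_mem_balanced hS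
  have card_fiber := card_filter_compl_add_card_filter (g · = 0) S
  rw [mem_balanced.1 hl 0] at card_fiber
  refine if_congr ⟨fun h => ?_, fun h => ?_⟩ rfl rfl
  · obtain rfl : k = l := by lia
    exact hl
  · obtain rfl := eq_of_mem_balanced h hl
    lia

end ShiftsGrade

section CyclicMatrix

variable {K : Type} [CommRing K] {d : ℕ} [NeZero d] {n : Fin d → ℕ}
  (A : ∀ j : Fin d, Matrix (Fin (n j)) (Fin (n (j + 1))) K)

/-- The block matrix with `A j` in block position `(j, j + 1)` and zeros elsewhere; its `d`-th power
has the cyclic product of the family `A` as its block at `(0, 0)`. -/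
def cyclicMatrix : Matrix (Σ j, Fin (n j)) (Σ j, Fin (n j)) K :=
  Matrix.of fun x y => if h : y.1 = x.1 + 1 then A x.1 x.2 (Fin.cast (congrArg n h) y.2) else 0

lemma shiftsGrade_cyclicMatrix : ShiftsGrade Sigma.fst (cyclicMatrix A) :=
  fun _ _ hxy => dif_neg hxy

open Fin.NatCast in
lemma cyclicMatrix_pow_apply (m : ℕ) (a : Fin (n 0)) (b : Fin (n (m : Fin d))) :
    (cyclicMatrix A ^ m) ⟨0, a⟩ ⟨m, b⟩ = cycProdAux A m a b := by
  induction m with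
  | zero =>
    simp [cycProdAux, colCast, Matrix.one_apply]
  | succ m ih =>
    rw [pow_succ, Matrix.mul_apply, Fintype.sum_sigma, sum_eq_single (m : Fin d)]
    · simp only [cycProdAux, colCast, Matrix.submatrix_apply, id, Matrix.mul_apply]
      refine sum_congr rfl fun c _ => ?_
      rw [ih c]
      simp [cyclicMatrix]
    · intro j _ hj
      refine sum_eq_zero fun c _ => ?_
      rw [(shiftsGrade_cyclicMatrix A).pow_apply_eq_zero m _ _ (by simpa using hj), zero_mul]
    · simp

open Fin.NatCast in
lemma cyclicMatrix_pow_apply_zero_zero (a b : Fin (n 0)) :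
    (cyclicMatrix A ^ d) ⟨0, a⟩ ⟨0, b⟩ = cycProd A a b := by
  have natCast_d : ((d : ℕ) : Fin d) = 0 := by simp
  have index_eq : (⟨0, b⟩ : Σ j, Fin (n j)) =
      ⟨(d : Fin d), Fin.cast (congrArg n natCast_d.symm) b⟩ :=
    Sigma.ext natCast_d.symm (by rw [Fin.heq_ext_iff (congrArg n natCast_d.symm)]; rfl)
  rw [index_eq, cyclicMatrix_pow_apply]
  rfl

lemma detXIplus_cycProd : detXIplus (cycProd A) =
    (Matrix.scalar _ Polynomial.X +
      ((cyclicMatrix A ^ d).toSquareBlockProp (Sigma.fst · = 0)).map Polynomial.C).det := by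
  rw [detXIplus, ← Matrix.det_submatrix_equiv_self (Equiv.sigmaSubtype (0 : Fin d)).symm]
  congr 1
  ext1 a b
  have block_entry : (cyclicMatrix A ^ d).toSquareBlockProp (Sigma.fst · = 0)
      ((Equiv.sigmaSubtype 0).symm a) ((Equiv.sigmaSubtype 0).symm b) = cycProd A a b :=
    cyclicMatrix_pow_apply_zero_zero A a b
  simp [block_entry, Matrix.one_apply, Matrix.diagonal_apply]

/-- The sum of the principal minors of the signed cyclic matrix of `A` having `k` rows in each
block. -/
def balancedMinorSum (k : ℕ) : K :=
  ∑ S ∈ balanced Sigma.fst k, principalMinor (negateOffZero Sigma.fst (cyclicMatrix A)) S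

theorem coeff_detXIplus_cycProd {k : ℕ} (hk : k ≤ n 0) :
    (detXIplus (cycProd A)).coeff (n 0 - k) = balancedMinorSum A k := by
  have card_block : #{x : Σ j, Fin (n j) | x.1 = 0} = n 0 := by
    rw [← Fintype.card_subtype, Fintype.card_congr (Equiv.sigmaSubtype 0), Fintype.card_fin]
  rw [detXIplus_cycProd]
  have := (shiftsGrade_cyclicMatrix A).coeff_det_X_add_pow (hk.trans_eq card_block.symm)
  rw [card_block] at this
  exact this

end CyclicMatrix

section SignedPermutations

lemma inv_signMatrix_mul_permMatrix {K : Type} [CommRing K] {m : ℕ} (ε : Fin m → Bool)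
    (π : Equiv.Perm (Fin m)) :
    (signMatrix K ε * π.permMatrix K)⁻¹ = (π⁻¹).permMatrix K * signMatrix K ε := by
  have perm_mul_inv : π.permMatrix K * (π⁻¹).permMatrix K = 1 := by
    rw [← Matrix.permMatrix_mul, inv_mul_cancel, Matrix.permMatrix_one]
  have sign_mul_self : signMatrix K ε * signMatrix K ε = 1 := by
    rw [signMatrix, Matrix.diagonal_mul_diagonal, ← Matrix.diagonal_one]
    congr! 2
    split_ifs <;> simp
  refine Matrix.inv_eq_right_inv ?_
  rw [Matrix.mul_assoc, ← Matrix.mul_assoc (π.permMatrix K), perm_mul_inv, Matrix.one_mul,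
    sign_mul_self]

lemma signed_permutation_mul_apply {K : Type} [CommRing K] {m p : ℕ} (ε : Fin m → Bool)
    (δ : Fin p → Bool) (π : Equiv.Perm (Fin m)) (ρ : Equiv.Perm (Fin p))
    (M : Matrix (Fin m) (Fin p) K) (a : Fin m) (b : Fin p) :
    ((signMatrix K ε * π.permMatrix K) * M * (signMatrix K δ * ρ.permMatrix K)⁻¹) a b =
      boolSign K (ε a) * M (π a) (ρ b) * boolSign K (δ b) := by
  rw [inv_signMatrix_mul_permMatrix, ← Matrix.mul_assoc, signMatrix, signMatrix,
    Matrix.mul_diagonal, Matrix.mul_assoc, Matrix.mul_assoc, Matrix.diagonal_mul,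
    PEquiv.toMatrix_toPEquiv_mul, PEquiv.mul_toMatrix_toPEquiv]
  simp [boolSign, Equiv.Perm.inv_def]

variable {K : Type} [CommRing K] {d : ℕ} [NeZero d] {n : Fin d → ℕ}
  (A D : ∀ j : Fin d, Matrix (Fin (n j)) (Fin (n (j + 1))) K)

/-- The family `(Q_j P_j) A_j (Q_{j+1} P_{j+1})⁻¹ + D_j`, where the signs `ε j` encode `Q_j` and the
permutation `π j` encodes `P_j`. -/
noncomputable def signedPermTwist (ε : ∀ j : Fin d, Fin (n j) → Bool)
    (π : ∀ j : Fin d, Equiv.Perm (Fin (n j))) (j : Fin d) :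
    Matrix (Fin (n j)) (Fin (n (j + 1))) K :=
  (signMatrix K (ε j) * (π j).permMatrix K) * A j *
    (signMatrix K (ε (j + 1)) * (π (j + 1)).permMatrix K)⁻¹ + D j

lemma negateOffZero_cyclicMatrix_signedPermTwist (ε : ∀ j : Fin d, Fin (n j) → Bool)
    (π : ∀ j : Fin d, Equiv.Perm (Fin (n j))) :
    negateOffZero Sigma.fst (cyclicMatrix (signedPermTwist A D ε π)) =
      Matrix.of (fun x y => boolSign K (ε x.1 x.2) *
        ((negateOffZero Sigma.fst (cyclicMatrix A)).submatrix (Equiv.sigmaCongrRight π)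
          (Equiv.sigmaCongrRight π)) x y * boolSign K (ε y.1 y.2)) +
      negateOffZero Sigma.fst (cyclicMatrix D) := by
  ext ⟨j, a⟩ ⟨l, b⟩
  by_cases hl : l = j + 1
  · subst hl
    by_cases hj : j = 0 <;>
      simp [negateOffZero, cyclicMatrix, signedPermTwist, signed_permutation_mul_apply, hj,
        add_comm]
  · simp [negateOffZero, cyclicMatrix, hl]

end SignedPermutations

section PermutationCounting

open scoped Nat

variable {α : Type*} [Fintype α] [DecidableEq α]

lemma card_perm_extending (W : Finset α) (f : W ↪ α) :
    #{π : Equiv.Perm α | ∀ w : W, π w = f w} = (Fintype.card α - #W)! := by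
  classical
  obtain ⟨τ, hτ⟩ : ∃ τ : Equiv.Perm α, ∀ w : W, τ w = f w :=
    ⟨(Equiv.ofInjective f f.injective).extendSubtype, fun w =>
      Equiv.extendSubtype_apply_of_mem _ (w : α) w.2⟩
  calc #{π : Equiv.Perm α | ∀ w : W, π w = f w}
      = #{π : Equiv.Perm α | ∀ a, ¬a ∉ W → π a = a} :=
        card_equiv (Equiv.mulLeft τ⁻¹) fun π => by simp [← hτ, Equiv.symm_apply_eq]
    _ = Fintype.card (Equiv.Perm {a // a ∉ W}) := by
        rw [← Fintype.card_subtype,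
          Fintype.card_congr (Equiv.Perm.subtypeEquivSubtypePerm (· ∉ W))]
    _ = (Fintype.card α - #W)! := by
        rw [Fintype.card_perm, Fintype.card_subtype_compl, Fintype.card_coe]

lemma card_perm_disjoint_map (V W : Finset α) :
    #{π : Equiv.Perm α | Disjoint V (W.map π.toEmbedding)} =
      (Fintype.card α - #V).descFactorial #W * (Fintype.card α - #W)! := by
  let extending (f : W ↪ (Vᶜ : Finset α)) : Finset (Equiv.Perm α) := {π | ∀ w : W, π w = f w}
  have card_extending (f) : #(extending f) = (Fintype.card α - #W)! :=
    card_perm_extending W (f.trans (.subtype _))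
  have pairwise_disjoint : ((univ : Finset (W ↪ (Vᶜ : Finset α))) : Set _).PairwiseDisjoint
      extending := fun f _ f' _ hne => disjoint_left.2 fun π hf hf' => hne <| by
    ext w
    exact ((mem_filter_univ π).1 hf w).symm.trans ((mem_filter_univ π).1 hf' w)
  have eq_biUnion : ({π | Disjoint V (W.map π.toEmbedding)} : Finset (Equiv.Perm α)) =
      univ.biUnion extending := by
    ext π
    simp only [mem_filter_univ, mem_biUnion, mem_univ, true_and, extending]
    constructor
    · intro hπ
      have mem_compl_image (w : W) : π w ∈ Vᶜ :=
        mem_compl.2 (disjoint_right.1 hπ (mem_map_of_mem π.toEmbedding w.2))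
      exact ⟨⟨fun w => ⟨π w, mem_compl_image w⟩, fun w w' h => by simpa using h⟩, fun w => rfl⟩
    · rintro ⟨f, hf⟩
      refine disjoint_right.2 fun a ha => ?_
      obtain ⟨w, hw, rfl⟩ := mem_map.1 ha
      exact (hf ⟨w, hw⟩).symm ▸ mem_compl.1 (f ⟨w, hw⟩).2
  rw [eq_biUnion, card_biUnion pairwise_disjoint, sum_congr rfl fun f _ => card_extending f,
    sum_const, card_univ, Fintype.card_embedding_eq, Fintype.card_coe, Fintype.card_coe,
    card_compl, smul_eq_mul]

variable {J : Type*} [DecidableEq J] {β : J → Type*} [∀ j, Fintype (β j)]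
  [∀ j, DecidableEq (β j)]

lemma card_filter_fst_eq (S : Finset (Σ j, β j)) (j : J) :
    #{x ∈ S | x.1 = j} = #{b : β j | ⟨j, b⟩ ∈ S} := by
  refine (card_bij (fun b _ => ⟨j, b⟩) ?_ ?_ ?_).symm
  · simp
  · simp
  · rintro ⟨l, b⟩ hx
    obtain ⟨hb, rfl⟩ := mem_filter.1 hx
    exact ⟨b, by simpa using hb, rfl⟩

lemma card_perm_family_disjoint_map [Fintype J] (V W : Finset (Σ j, β j)) :
    #{π : ∀ j, Equiv.Perm (β j) | Disjoint V (W.map (Equiv.sigmaCongrRight π).toEmbedding)} =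
      ∏ j, (Fintype.card (β j) - #{x ∈ V | x.1 = j}).descFactorial #{x ∈ W | x.1 = j} *
        (Fintype.card (β j) - #{x ∈ W | x.1 = j})! := by
  let fiber (S : Finset (Σ j, β j)) (j : J) : Finset (β j) := {b | ⟨j, b⟩ ∈ S}
  have disjoint_iff (π : ∀ j, Equiv.Perm (β j)) :
      Disjoint V (W.map (Equiv.sigmaCongrRight π).toEmbedding) ↔
        ∀ j, Disjoint (fiber V j) ((fiber W j).map (π j).toEmbedding) := by
    simp [disjoint_right, fiber, Sigma.forall]
  have eq_piFinset : ({π | Disjoint V (W.map (Equiv.sigmaCongrRight π).toEmbedding)} :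
      Finset (∀ j, Equiv.Perm (β j))) = Fintype.piFinset fun j =>
        {π | Disjoint (fiber V j) ((fiber W j).map π.toEmbedding)} := by
    ext π
    simp [disjoint_iff]
  rw [eq_piFinset, Fintype.card_piFinset]
  refine prod_congr rfl fun j _ => ?_
  rw [card_perm_disjoint_map, card_filter_fst_eq, card_filter_fst_eq]

lemma factorial_mul_factorial_div_factorial {m k i : ℕ} (hik : i ≤ k) (hkm : k ≤ m) :
    (m - k + i)! * (m - i)! / (m - k)! = (m - i).descFactorial (k - i) * (m - (k - i))! := by
  have sub_sub_eq : m - i - (k - i) = m - k := by lia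
  have sub_add_eq : m - k + i = m - (k - i) := by lia
  rw [Nat.descFactorial_eq_div (by lia), sub_sub_eq, sub_add_eq, mul_comm,
    Nat.div_mul_right_comm (Nat.factorial_dvd_factorial (by lia))]

end PermutationCounting

section BalancedSums

lemma sum_powerset_sdiff_eq_sum_disjoint {ι N : Type*} [Fintype ι] [DecidableEq ι] [AddCommMonoid N]
    (𝒮 : Finset (Finset ι)) (F : Finset ι → Finset ι → N) :
    ∑ S ∈ 𝒮, ∑ U ∈ S.powerset, F U (S \ U) =
      ∑ U, ∑ W, if Disjoint U W ∧ U ∪ W ∈ 𝒮 then F U W else 0 := by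
  rw [← sum_product', univ_product_univ, ← sum_filter, sum_sigma']
  refine sum_bij' (fun x _ => (x.2, x.1 \ x.2)) (fun x _ => ⟨x.1 ∪ x.2, x.1⟩) ?_ ?_ ?_ ?_ ?_
  · rintro ⟨S, U⟩ h
    obtain ⟨hS, hU⟩ := mem_sigma.1 h
    rw [mem_filter_univ, union_sdiff_of_subset (mem_powerset.1 hU)]
    exact ⟨disjoint_sdiff, hS⟩
  · rintro ⟨U, W⟩ h
    exact mem_sigma.2 ⟨((mem_filter_univ _).1 h).2, mem_powerset.2 subset_union_left⟩
  · rintro ⟨S, U⟩ h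
    have hU := mem_powerset.1 (mem_sigma.1 h).2
    simp only [union_sdiff_of_subset hU]
  · rintro ⟨U, W⟩ h
    simp only [union_sdiff_cancel_left ((mem_filter_univ _).1 h).1]
  · simp

section Fibres

variable {ι J : Type*} [Fintype ι] [Fintype J] [DecidableEq J] [Nonempty J]
  {g : ι → J}

lemma sum_eq_sum_balanced {N : Type*} [AddCommMonoid N] {F : Finset ι → N} {k : ℕ}
    (hF : ∀ U, F U ≠ 0 → ∃ i ≤ k, U ∈ balanced g i) :
    ∑ U, F U = ∑ i ∈ range (k + 1), ∑ U ∈ balanced g i, F U := by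
  classical
  rw [← sum_biUnion fun i _ i' _ hne => disjoint_left.2 fun U hU hU' =>
    hne (eq_of_mem_balanced hU hU')]
  refine (sum_subset (subset_univ _) fun U _ hU => ?_).symm
  contrapose! hU
  obtain ⟨i, hik, hi⟩ := hF U hU
  exact mem_biUnion.2 ⟨i, mem_range_succ_iff.2 hik, hi⟩

variable [DecidableEq ι]

lemma union_mem_balanced_iff {i k : ℕ} {U W : Finset ι} (hU : U ∈ balanced g i)
    (hUW : Disjoint U W) : U ∪ W ∈ balanced g k ↔ i ≤ k ∧ W ∈ balanced g (k - i) := by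
  have card_union (j : J) : #{a ∈ U ∪ W | g a = j} = i + #{a ∈ W | g a = j} := by
    rw [filter_union, card_union_of_disjoint (disjoint_filter_filter hUW), mem_balanced.1 hU j]
  simp only [mem_balanced, card_union]
  constructor
  · intro h
    have ⟨j₀⟩ := ‹Nonempty J›
    exact ⟨(h j₀).symm ▸ Nat.le_add_right _ _, fun j => by have := h j; lia⟩
  · rintro ⟨hik, hW⟩ j
    have := hW j
    lia

lemma sum_balanced_powerset {R : Type*} [CommRing R] {f : Finset ι → R} (h : Finset ι → R)
    (hf : ∀ U, f U ≠ 0 → ∃ i, U ∈ balanced g i) (k : ℕ) :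
    ∑ S ∈ balanced g k, ∑ U ∈ S.powerset, f U * h (S \ U) =
      ∑ i ∈ range (k + 1), ∑ U ∈ balanced g i, ∑ W ∈ balanced g (k - i),
        if Disjoint U W then f U * h W else 0 := by
  rw [sum_powerset_sdiff_eq_sum_disjoint _ fun U W => f U * h W,
    sum_eq_sum_balanced (g := g) (k := k)]
  · refine sum_congr rfl fun i hi => sum_congr rfl fun U hU => ?_
    have hik := mem_range_succ_iff.1 hi
    rw [← univ_inter (balanced g (k - i)), ← sum_ite_mem]
    refine sum_congr rfl fun W _ => ?_
    by_cases hUW : Disjoint U W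
    · simp [hUW, union_mem_balanced_iff hU hUW, hik]
    · simp [hUW]
  · intro U hU
    obtain ⟨W, -, hW⟩ := exists_ne_zero_of_sum_ne_zero hU
    obtain ⟨⟨hUW, hunion⟩, hterm⟩ := ite_ne_right_iff.1 hW
    obtain ⟨i, hi⟩ := hf U (left_ne_zero_of_mul hterm)
    exact ⟨i, ((union_mem_balanced_iff hi hUW).1 hunion).1, hi⟩

end Fibres

section PermutationAverage

open scoped Nat

variable {J R : Type*} [Fintype J] [DecidableEq J] {β : J → Type*} [∀ j, Fintype (β j)]
  [CommRing R]

lemma map_sigmaCongrRight_mem_balanced_iff (π : ∀ j, Equiv.Perm (β j)) {S : Finset (Σ j, β j)}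
    {k : ℕ} : S.map (Equiv.sigmaCongrRight π).toEmbedding ∈ balanced Sigma.fst k ↔
      S ∈ balanced Sigma.fst k := by
  simp [mem_balanced, filter_map]

variable [∀ j, DecidableEq (β j)]

lemma sum_perm_disjoint (V W : Finset (Σ j, β j)) (r : R) :
    ∑ π : ∀ j, Equiv.Perm (β j),
        (if Disjoint V (W.map (Equiv.sigmaCongrRight π).toEmbedding) then r else 0) =
      (∏ j, ((Fintype.card (β j) - #{x ∈ V | x.1 = j}).descFactorial #{x ∈ W | x.1 = j} *
        (Fintype.card (β j) - #{x ∈ W | x.1 = j})! : ℕ)) * r := by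
  rw [← sum_filter, sum_const, card_perm_family_disjoint_map, nsmul_eq_mul]

theorem sum_perm_sum_balanced_powerset [Nonempty J] {f : Finset (Σ j, β j) → R}
    (h : Finset (Σ j, β j) → R) (hf : ∀ U, f U ≠ 0 → ∃ i, U ∈ balanced Sigma.fst i) {k : ℕ}
    (hk : ∀ j, k ≤ Fintype.card (β j)) :
    ∑ π : ∀ j, Equiv.Perm (β j), ∑ S ∈ balanced Sigma.fst k, ∑ U ∈ S.powerset,
        f (U.map (Equiv.sigmaCongrRight π).toEmbedding) * h (S \ U) =
      ∑ i ∈ range (k + 1),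
        (∏ j, (((Fintype.card (β j) - k + i)! * (Fintype.card (β j) - i)! /
          (Fintype.card (β j) - k)! : ℕ) : R)) *
        (∑ V ∈ balanced Sigma.fst i, f V) * ∑ W ∈ balanced Sigma.fst (k - i), h W := by
  have reindex (π : ∀ j, Equiv.Perm (β j)) (i : ℕ) :
      ∑ U ∈ balanced Sigma.fst i, ∑ W ∈ balanced Sigma.fst (k - i),
        (if Disjoint U W then f (U.map (Equiv.sigmaCongrRight π).toEmbedding) * h W else 0) =
      ∑ V ∈ balanced Sigma.fst i, ∑ W ∈ balanced Sigma.fst (k - i),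
        if Disjoint V (W.map (Equiv.sigmaCongrRight π).toEmbedding) then f V * h W else 0 :=
    sum_equiv (Equiv.sigmaCongrRight π).finsetCongr
      (fun U => (map_sigmaCongrRight_mem_balanced_iff π).symm) fun U _ => by simp
  have supported (π : ∀ j, Equiv.Perm (β j)) (U : Finset (Σ j, β j))
      (hU : f (U.map (Equiv.sigmaCongrRight π).toEmbedding) ≠ 0) :
      ∃ i, U ∈ balanced Sigma.fst i :=
    (hf _ hU).imp fun i => (map_sigmaCongrRight_mem_balanced_iff π).1
  simp only [fun π => sum_balanced_powerset h (supported π) k, reindex]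
  rw [sum_comm]
  refine sum_congr rfl fun i hi => ?_
  have hik := mem_range_succ_iff.1 hi
  rw [sum_comm, mul_assoc, sum_mul_sum, mul_sum]
  refine sum_congr rfl fun V hV => ?_
  rw [sum_comm, mul_sum]
  refine sum_congr rfl fun W hW => ?_
  rw [sum_perm_disjoint, Nat.cast_prod]
  simp only [mem_balanced.1 hV, mem_balanced.1 hW, factorial_mul_factorial_div_factorial hik (hk _)]

end PermutationAverage

end BalancedSums

section SignedPermutationAverage

variable {K : Type} [CommRing K] {d : ℕ} [NeZero d] {n : Fin d → ℕ}
  (A D : ∀ j : Fin d, Matrix (Fin (n j)) (Fin (n (j + 1))) K)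

lemma sum_sign_principalMinor_signedPermTwist (π : ∀ j : Fin d, Equiv.Perm (Fin (n j)))
    (S : Finset (Σ j, Fin (n j))) :
    ∑ ε : (∀ j : Fin d, Fin (n j) → Bool), principalMinor
        (negateOffZero Sigma.fst (cyclicMatrix (signedPermTwist A D ε π))) S =
      (1 + 1) ^ (∑ j, n j) * ∑ U ∈ S.powerset,
        principalMinor (negateOffZero Sigma.fst (cyclicMatrix A))
            (U.map (Equiv.sigmaCongrRight π).toEmbedding) *
          principalMinor (negateOffZero Sigma.fst (cyclicMatrix D)) (S \ U) := by
  let T := negateOffZero Sigma.fst (cyclicMatrix A)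
  let σ := Equiv.sigmaCongrRight π
  have minor_permuted (U : Finset (Σ j, Fin (n j))) :
      principalMinor (T.submatrix σ σ) U = principalMinor T (U.map σ.toEmbedding) :=
    principalMinor_submatrix T σ.toEmbedding U
  have average := sum_sign_principalMinor_add (T.submatrix σ σ)
    (negateOffZero Sigma.fst (cyclicMatrix D)) S
  simp only [minor_permuted, Fintype.card_sigma, Fintype.card_fin] at average
  rw [← average, ← Equiv.sum_comp (Equiv.piCurry fun (j : Fin d) (_ : Fin (n j)) => Bool)]
  refine sum_congr rfl fun ε _ => ?_
  rw [negateOffZero_cyclicMatrix_signedPermTwist]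
  rfl

theorem sum_balancedMinorSum_signedPermTwist {k : ℕ} (hk : ∀ j, k ≤ n j) :
    ∑ ε : (∀ j : Fin d, Fin (n j) → Bool), ∑ π : (∀ j : Fin d, Equiv.Perm (Fin (n j))),
        balancedMinorSum (signedPermTwist A D ε π) k =
      (1 + 1) ^ (∑ j, n j) * ∑ i ∈ range (k + 1),
        (∏ j, (((n j - k + i).factorial * (n j - i).factorial / (n j - k).factorial : ℕ) : K)) *
          balancedMinorSum A i * balancedMinorSum D (k - i) := by
  have permutation_average := sum_perm_sum_balanced_powerset
    (principalMinor (negateOffZero Sigma.fst (cyclicMatrix D)))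
    (fun _ => (shiftsGrade_cyclicMatrix A).negate.exists_mem_balanced) (k := k) (by simpa using hk)
  simp only [Fintype.card_fin] at permutation_average
  calc
    _ = ∑ π : (∀ j : Fin d, Equiv.Perm (Fin (n j))), ∑ S ∈ balanced Sigma.fst k,
          ∑ ε : (∀ j : Fin d, Fin (n j) → Bool), principalMinor
            (negateOffZero Sigma.fst (cyclicMatrix (signedPermTwist A D ε π))) S := by
      rw [sum_comm]
      exact sum_congr rfl fun π _ => sum_comm
    _ = _ := by
      simp only [sum_sign_principalMinor_signedPermTwist, ← mul_sum]
      exact congrArg _ permutation_average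

end SignedPermutationAverage

lemma coeff_sum_C_mul_X_pow_sub {R : Type*} [Semiring R] (c : ℕ → R) {N k : ℕ} (hk : k ≤ N) :
    (∑ i ∈ range (N + 1), Polynomial.C (c i) * Polynomial.X ^ (N - i)).coeff (N - k) = c k := by
  simp only [Polynomial.finsetSum_coeff, Polynomial.coeff_C_mul_X_pow]
  rw [sum_eq_single_of_mem k (mem_range_succ_iff.2 hk), if_pos rfl]
  intro i hi hik
  have := mem_range_succ_iff.1 hi
  exact if_neg (by lia)

theorem stmt_8 {K : Type} [CommRing K] (d : ℕ) [NeZero d] (n : Fin d → ℕ)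
    (A D : ∀ j : Fin d, Matrix (Fin (n j)) (Fin (n (j + 1))) K)
    (pp qq rr : ℕ → K)
    (hp : detXIplus (cycProd A) =
      ∑ i ∈ Finset.range (n 0 + 1), Polynomial.C (pp i) * Polynomial.X ^ (n 0 - i))
    (hq : detXIplus (cycProd D) =
      ∑ i ∈ Finset.range (n 0 + 1), Polynomial.C (qq i) * Polynomial.X ^ (n 0 - i))
    (hr : (∑ ε : (∀ j : Fin d, Fin (n j) → Bool),
            ∑ π : (∀ j : Fin d, Equiv.Perm (Fin (n j))),
              detXIplus (cycProd (fun j =>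
                (signMatrix K (ε j) * (π j).permMatrix K) * A j *
                    (signMatrix K (ε (j + 1)) * (π (j + 1)).permMatrix K)⁻¹ + D j))) =
      ∑ i ∈ Finset.range (n 0 + 1), Polynomial.C (rr i) * Polynomial.X ^ (n 0 - i))
    (k : ℕ) (hk : ∀ j, k ≤ n j) :
    rr k = (1 + 1 : K) ^ (∑ j : Fin d, n j) *
      ∑ i ∈ Finset.range (k + 1),
        (∏ j : Fin d,
          (((n j - k + i).factorial * (n j - i).factorial / (n j - k).factorial : ℕ) : K)) *
          pp i * qq (k - i) := by
  have pp_eq {i : ℕ} (hi : i ≤ n 0) : pp i = balancedMinorSum A i := by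
    rw [← coeff_sum_C_mul_X_pow_sub pp hi, ← hp, coeff_detXIplus_cycProd A hi]
  have qq_eq {i : ℕ} (hi : i ≤ n 0) : qq i = balancedMinorSum D i := by
    rw [← coeff_sum_C_mul_X_pow_sub qq hi, ← hq, coeff_detXIplus_cycProd D hi]
  rw [← coeff_sum_C_mul_X_pow_sub rr (hk 0), ← hr]
  simp only [Polynomial.finsetSum_coeff, coeff_detXIplus_cycProd _ (hk 0)]
  refine (sum_balancedMinorSum_signedPermTwist A D hk).trans ?_
  congr 1
  refine sum_congr rfl fun i hi => ?_
  have hik : i ≤ k := mem_range_succ_iff.1 hi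
  rw [pp_eq (hik.trans (hk 0)), qq_eq ((Nat.sub_le k i).trans (hk 0))]
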